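/- arXiv:2403.01064 — 2 statements merged into one kernel-verified Lean document; each statement's English description precedes it below -/
import Mathlib

section
/- Let q ∈ ℂ with 0 < |q| < 1, let p be a positive integer, and let y ∈ ℂ with y ≠ 0. Assume the family (i,j) ↦ τ_p(j-i) τ(i-j) y^{i-j} q^{(i-1)j} / ((q;q)_i (q;q)_j) indexed by ℕ×ℕ is absolutely summable. Then ∑_{i,j≥0} τ_p(j-i) τ(i-j) y^{i-j} q^{(i-1)j} / ((q;q)_i (q;q)_j) = [(-1/y; q^{p+1})_∞ (-q^{p+1} y; q^{p+1})_∞ (q^{p+1}; q^{p+1})_∞ + (-q/y; q^{p+1})_∞ (-q^p y; q^{p+1})_∞ (q^{p+1}; q^{p+1})_∞] / (q;q)_∞. -/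
/-- The finite q-shifted factorial with base `Q`: `(a;Q)_n = ∏_{k=0}^{n-1} (1 - a Q^k)`. -/
noncomputable def qPoch (a q : ℂ) (n : ℕ) : ℂ := ∏ k ∈ Finset.range n, (1 - a * q ^ k)

/-- The infinite q-shifted factorial `(a;Q)_∞ = ∏_{k=0}^{∞} (1 - a Q^k)`. -/
noncomputable def qPochInf (a q : ℂ) : ℂ := ∏' k : ℕ, (1 - a * q ^ k)

/-- `τ(n) = (-1)^n q^{n(n-1)/2}` for `n : ℤ`. -/
noncomputable def qTauZ (q : ℂ) (n : ℤ) : ℂ := (-1 : ℂ) ^ n * q ^ ((n * (n - 1)) / 2).toNat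

/-- `τ_p(n) = (-1)^n q^{p·n(n-1)/2}` for `n : ℤ`. -/
noncomputable def qTauP (q : ℂ) (p : ℕ) (n : ℤ) : ℂ :=
  (-1 : ℂ) ^ n * q ^ (p * ((n * (n - 1)) / 2).toNat)

open Filter Topology

lemma qs_norm_summable (a q : ℂ) (hq : ‖q‖ < 1) : Summable (fun k : ℕ => ‖-(a * q ^ k)‖) := by
  simp only [norm_neg, norm_mul, norm_pow]
  exact (summable_geometric_of_lt_one (norm_nonneg _) hq).mul_left _

lemma qPoch_tendsto (a q : ℂ) (hq : ‖q‖ < 1) :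
    Tendsto (qPoch a q) atTop (𝓝 (qPochInf a q)) := by
  have h := multipliable_one_add_of_summable (qs_norm_summable a q hq)
  simp only [← sub_eq_add_neg] at h
  exact h.hasProd.tendsto_prod_nat

lemma one_sub_ne (q : ℂ) (hq : ‖q‖ < 1) (k : ℕ) : 1 - q ^ (k + 1) ≠ 0 := by
  intro h
  have h2 : ‖q ^ (k + 1)‖ = 1 := by rw [← sub_eq_zero.mp h]; simp
  rw [norm_pow] at h2
  have := pow_lt_one₀ (norm_nonneg q) hq (Nat.succ_ne_zero k)
  simp at this
  linarith

lemma qPoch_succ (q : ℂ) (n : ℕ) : qPoch q q (n + 1) = qPoch q q n * (1 - q ^ (n + 1)) := by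
  rw [qPoch, Finset.prod_range_succ, ← qPoch, pow_succ']

lemma qPoch_ne (q : ℂ) (hq : ‖q‖ < 1) (n : ℕ) : qPoch q q n ≠ 0 := by
  refine Finset.prod_ne_zero_iff.mpr fun k _ => ?_
  rw [← pow_succ']; exact one_sub_ne q hq k

lemma qPochInf_ne (q : ℂ) (hq : ‖q‖ < 1) : qPochInf q q ≠ 0 := by
  have h := tprod_one_add_ne_zero_of_summable (f := fun k : ℕ => -(q * q ^ k)) (fun k => by
    rw [← sub_eq_add_neg, ← pow_succ']; exact one_sub_ne q hq k) (qs_norm_summable q q hq)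
  simp only [← sub_eq_add_neg] at h
  exact h

lemma qPoch_inv_bound (q : ℂ) (hq : ‖q‖ < 1) : ∃ C : ℝ, 0 ≤ C ∧ ∀ n, ‖(qPoch q q n)⁻¹‖ ≤ C := by
  have h := (qPoch_tendsto q q hq).inv₀ (qPochInf_ne q hq)
  obtain ⟨C, hC⟩ := (Metric.isBounded_range_of_tendsto _ h).exists_norm_le
  exact ⟨C, (norm_nonneg _).trans (hC _ ⟨0, rfl⟩), fun n => hC _ ⟨n, rfl⟩⟩

noncomputable def qa (q : ℂ) (n k : ℕ) : ℂ := q ^ (k * (k + n)) / (qPoch q q k * qPoch q q (k + n))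

lemma qa_bound (q : ℂ) (hq : ‖q‖ < 1) : ∃ C : ℝ, ∀ n k, ‖qa q n k‖ ≤ C * ‖q‖ ^ k := by
  obtain ⟨C, h0, hC⟩ := qPoch_inv_bound q hq
  refine ⟨C * C, fun n k => ?_⟩
  have h1 : ‖q‖ ^ (k * (k + n)) ≤ ‖q‖ ^ k := by
    apply pow_le_pow_of_le_one (norm_nonneg _) hq.le
    rcases k with _ | k
    · simp
    · exact Nat.le_mul_of_pos_right _ (by omega)
  rw [qa, div_eq_mul_inv, mul_inv, norm_mul, norm_mul, norm_pow, mul_comm]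
  have := hC k
  have := hC (k + n)
  gcongr

lemma qa_summable (q : ℂ) (hq : ‖q‖ < 1) (n : ℕ) : Summable (qa q n) := by
  obtain ⟨C, hC⟩ := qa_bound q hq
  exact Summable.of_norm_bounded
    ((summable_geometric_of_lt_one (norm_nonneg _) hq).mul_left C) (hC n)

lemma qa_tendsto (q : ℂ) (hq : ‖q‖ < 1) :
    Tendsto (fun n => ∑' k, qa q n k) atTop (𝓝 (qPochInf q q)⁻¹) := by
  obtain ⟨C, hC⟩ := qa_bound q hq
  have key := tendsto_tsum_of_dominated_convergence (𝓕 := atTop) (f := fun n k => qa q n k)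
    (g := fun k => if k = 0 then (qPochInf q q)⁻¹ else 0)
    ((summable_geometric_of_lt_one (norm_nonneg _) hq).mul_left C) ?_ (Eventually.of_forall hC)
  · simpa using key
  · intro k
    have h := (qPoch_tendsto q q hq).inv₀ (qPochInf_ne q hq)
    have h' : Tendsto (fun n => (qPoch q q (k + n))⁻¹) atTop (𝓝 (qPochInf q q)⁻¹) := by
      have := (tendsto_add_atTop_iff_nat k).mpr h
      simpa only [add_comm] using this
    rcases k with _ | k
    · simpa [qa, qPoch] using h
    · have h3 : Tendsto (fun n : ℕ => q ^ ((k + 1) * (k + 1 + n))) atTop (𝓝 0) := by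
        refine (tendsto_pow_atTop_nhds_zero_of_norm_lt_one hq).comp ?_
        refine tendsto_atTop_mono (fun n => ?_) tendsto_id
        simp only [id]; nlinarith
      have := (h3.mul_const (qPoch q q (k+1))⁻¹).mul h'
      simpa [qa, div_eq_mul_inv, mul_inv, mul_assoc, mul_comm, mul_left_comm] using this

lemma hasSum_shift (c d : ℕ → ℂ) (h0 : c 0 = 0) (h : ∀ k, c (k + 1) = d k) {s : ℂ}
    (hd : HasSum d s) : HasSum c s := by
  have h2 : (fun k => c (k + 1)) = d := funext h
  have := (hasSum_nat_add_iff (f := c) 1).mp (h2 ▸ hd)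
  simpa [h0] using this

lemma qa_rec (q : ℂ) (hq : ‖q‖ < 1) (n : ℕ) :
    (∑' k, qa q n k) - ∑' k, qa q (n + 1) k =
      - q ^ (n + 1) * ((∑' k, qa q (n + 1) k) - ∑' k, qa q (n + 2) k) := by
  have e0 := (qa_summable q hq n).hasSum
  have e1 := (qa_summable q hq (n+1)).hasSum
  have e2 := (qa_summable q hq (n+2)).hasSum
  have h1 := (e0.sub e1).add (e1.mul_left (q ^ (n + 1)))
  have h2 := e2.mul_left (q ^ (n + 1))
  have key : ∀ k, qa q n k - qa q (n+1) k + q ^ (n+1) * qa q (n+1) k =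
      q ^ (k * (k + n)) * (1 - q ^ k) / (qPoch q q k * qPoch q q (k + n + 1)) := by
    intro k
    have a1 := qPoch_ne q hq k
    have a2 := qPoch_ne q hq (k + n)
    have a3 := one_sub_ne q hq (k + n)
    rw [qa, qa, ← add_assoc k n 1, qPoch_succ]
    field_simp
    ring
  have h3 := hasSum_shift (fun k => qa q n k - qa q (n+1) k + q ^ (n+1) * qa q (n+1) k) _
    (by simp [key]) (fun k => ?_) h2
  · have := h1.unique h3
    linear_combination this
  · rw [key, qa]
    have a1 := qPoch_ne q hq k
    have a2 := qPoch_ne q hq (k + (n + 2))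
    have a3 := one_sub_ne q hq k
    rw [qPoch_succ, show k + 1 + n + 1 = k + (n + 2) by ring]
    field_simp
    ring

lemma qa_hasSum (q : ℂ) (hq : ‖q‖ < 1) (n : ℕ) : HasSum (qa q n) (qPochInf q q)⁻¹ := by
  set A : ℕ → ℂ := fun n => ∑' k, qa q n k with hA
  have hlim : Tendsto A atTop (𝓝 (qPochInf q q)⁻¹) := qa_tendsto q hq
  have hD : Tendsto (fun n => ‖A n - A (n + 1)‖) atTop (𝓝 0) := by
    have := (hlim.sub ((tendsto_add_atTop_iff_nat 1).mpr hlim)).norm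
    simpa using this
  have hm : Monotone (fun n => ‖A n - A (n + 1)‖) := by
    refine monotone_nat_of_le_succ fun n => ?_
    have := qa_rec q hq n
    change A n - A (n+1) = _ * (A (n+1) - A (n+2)) at this
    rw [this, norm_mul, norm_neg, norm_pow]
    exact mul_le_of_le_one_left (norm_nonneg _) (pow_le_one₀ (norm_nonneg _) hq.le)
  have hz : ∀ n, A (n + 1) = A n := fun n => by
    have := hm.ge_of_tendsto hD n
    exact (sub_eq_zero.mp (norm_le_zero_iff.mp this)).symm
  have hc : ∀ n, A n = A 0 := fun n => by
    induction n with
    | zero => rfl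
    | succ k ih => rw [hz, ih]
  have : A n = (qPochInf q q)⁻¹ := by
    rw [hc n]
    refine tendsto_nhds_unique ?_ hlim
    rw [show A = fun _ => A 0 from funext hc]
    exact tendsto_const_nhds
  rw [← this]
  exact (qa_summable q hq n).hasSum

lemma qb_hasSum (q : ℂ) (hq0 : q ≠ 0) (hq : ‖q‖ < 1) (n : ℕ) :
    HasSum (fun k => qa q n k * (q ^ k)⁻¹) ((1 + q ^ n) * (qPochInf q q)⁻¹) := by
  have h1 := qa_hasSum q hq n
  have h2 := (qa_hasSum q hq (n + 1)).mul_left (q ^ n)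
  have h3 := hasSum_shift (fun k => qa q n k * (q ^ k)⁻¹ - qa q n k) _
    (by simp) (fun k => ?_) h2
  · have := h1.add h3
    simp only [add_sub_cancel] at this
    rwa [add_mul, one_mul]
  · rw [qa, qa]
    have a1 := qPoch_ne q hq k
    have a2 := qPoch_ne q hq (k + (n + 1))
    have a3 := one_sub_ne q hq k
    rw [qPoch_succ, show k + 1 + n = k + (n + 1) by ring]
    field_simp
    ring

lemma euler_summable (q : ℂ) (hq : ‖q‖ < 1) (z : ℂ) :
    Summable (fun i : ℕ => q ^ (i.choose 2) * z ^ i / qPoch q q i) := by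
  refine summable_of_ratio_norm_eventually_le (r := 1 / 2) (by norm_num) ?_
  have h1 := tendsto_pow_atTop_nhds_zero_of_norm_lt_one hq
  have h2 : Tendsto (fun i => ‖q ^ i * z / (1 - q ^ (i + 1))‖) atTop (𝓝 0) := by
    have := ((h1.mul_const z).div (tendsto_const_nhds.sub
      ((tendsto_add_atTop_iff_nat 1).mpr h1)) (by simp : (1 : ℂ) - 0 ≠ 0)).norm
    simpa using this
  filter_upwards [h2.eventually_le_const (by norm_num : (0 : ℝ) < 1 / 2)] with i hi
  have : q ^ ((i + 1).choose 2) * z ^ (i + 1) / qPoch q q (i + 1) =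
      (q ^ i * z / (1 - q ^ (i + 1))) * (q ^ (i.choose 2) * z ^ i / qPoch q q i) := by
    have a1 := qPoch_ne q hq i
    have a3 := one_sub_ne q hq i
    rw [qPoch_succ, Nat.choose_succ_succ' i 1, Nat.choose_one_right]
    field_simp
    ring
  rw [this, norm_mul]
  gcongr

lemma euler_rec (q : ℂ) (hq : ‖q‖ < 1) (z : ℂ) :
    (∑' i : ℕ, q ^ (i.choose 2) * z ^ i / qPoch q q i) =
    (1 + z) * ∑' i : ℕ, q ^ (i.choose 2) * (z * q) ^ i / qPoch q q i := by
  have e1 := (euler_summable q hq z).hasSum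
  have e2 := (euler_summable q hq (z * q)).hasSum
  have h := hasSum_shift (fun i : ℕ => q ^ (i.choose 2) * z ^ i / qPoch q q i -
    q ^ (i.choose 2) * (z * q) ^ i / qPoch q q i) _ (by simp) (fun k => ?_) (e2.mul_left z)
  · have := (e1.sub e2).unique h
    linear_combination this
  · have a1 := qPoch_ne q hq k
    have a3 := one_sub_ne q hq k
    rw [qPoch_succ, Nat.choose_succ_succ' k 1, Nat.choose_one_right]
    field_simp
    ring

lemma euler_tsum (q : ℂ) (hq : ‖q‖ < 1) (z : ℂ) :
    (∑' i : ℕ, q ^ (i.choose 2) * z ^ i / qPoch q q i) = qPochInf (-z) q := by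
  have hN : ∀ N : ℕ, (∑' i : ℕ, q ^ (i.choose 2) * z ^ i / qPoch q q i) =
      qPoch (-z) q N * ∑' i : ℕ, q ^ (i.choose 2) * (z * q ^ N) ^ i / qPoch q q i := by
    intro N
    induction N with
    | zero => simp [qPoch]
    | succ N ih =>
      rw [ih, euler_rec q hq (z * q ^ N), qPoch, qPoch, Finset.prod_range_succ]
      rw [mul_assoc z, ← pow_succ]
      ring
  have hl : Tendsto (fun N : ℕ => ∑' i : ℕ, q ^ (i.choose 2) * (z * q ^ N) ^ i / qPoch q q i)
      atTop (𝓝 1) := by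
    have key := tendsto_tsum_of_dominated_convergence (𝓕 := atTop)
      (f := fun (N : ℕ) (i : ℕ) => q ^ (i.choose 2) * (z * q ^ N) ^ i / qPoch q q i)
      (g := fun i => if i = 0 then (1 : ℂ) else 0) (euler_summable q hq z).norm ?_ ?_
    · simpa using key
    · intro i
      have h1 := tendsto_pow_atTop_nhds_zero_of_norm_lt_one hq
      have h2 := (((h1.const_mul z).pow i).const_mul (q ^ (i.choose 2))).div_const (qPoch q q i)
      rcases i with _ | i
      · simp [qPoch]
      · simpa using h2
    · refine Eventually.of_forall fun N i => ?_
      rw [norm_div, norm_div, norm_mul, norm_mul, norm_pow (z * _), norm_pow z, norm_mul, norm_pow q N]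
      gcongr
      exact mul_le_of_le_one_right (norm_nonneg _) (pow_le_one₀ (norm_nonneg _) hq.le)
  have h := (qPoch_tendsto (-z) q hq).mul hl
  simp only [← hN, mul_one] at h
  exact tendsto_nhds_unique tendsto_const_nhds h

def zEquiv : ℤ × ℕ ≃ ℕ × ℕ where
  toFun x := (x.2 + x.1.toNat, x.2 + (-x.1).toNat)
  invFun x := ((x.1 : ℤ) - x.2, min x.1 x.2)
  left_inv := by
    rintro ⟨n, k⟩
    ext <;> simp only <;> omega
  right_inv := by
    rintro ⟨i, j⟩
    ext <;> simp only <;> omega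

lemma zEquiv_sub (n : ℤ) (k : ℕ) : ((zEquiv (n, k)).1 : ℤ) - ((zEquiv (n, k)).2 : ℤ) = n := by
  simp only [zEquiv, Equiv.coe_fn_mk]; omega

lemma hasSum_congr2 {ι : Type} {f g : ι → ℂ} {a b : ℂ} (h : HasSum f a) (h1 : ∀ k, g k = f k)
    (h2 : b = a) : HasSum g b := by
  rw [h2, show g = f from funext h1]; exact h

lemma fiber1 (q : ℂ) (hq : ‖q‖ < 1) (n : ℤ) :
    HasSum (fun k => q ^ ((zEquiv (n, k)).1 * (zEquiv (n, k)).2) /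
      (qPoch q q (zEquiv (n, k)).1 * qPoch q q (zEquiv (n, k)).2)) (qPochInf q q)⁻¹ := by
  simp only [zEquiv, Equiv.coe_fn_mk]
  obtain ⟨m, rfl | rfl⟩ := n.eq_nat_or_neg
  · refine (qa_hasSum q hq m).congr_fun ?_ |> id
    intro k
    simp [qa, mul_comm]
  · refine (qa_hasSum q hq m).congr_fun ?_ |> id
    intro k
    simp [qa]

lemma fiber2 (q : ℂ) (hq0 : q ≠ 0) (hq : ‖q‖ < 1) (n : ℤ) :
    HasSum (fun k => q ^ ((zEquiv (n, k)).1 * (zEquiv (n, k)).2) * (q ^ (zEquiv (n, k)).2)⁻¹ /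
      (qPoch q q (zEquiv (n, k)).1 * qPoch q q (zEquiv (n, k)).2))
      ((1 + q ^ n) * (qPochInf q q)⁻¹) := by
  simp only [zEquiv, Equiv.coe_fn_mk]
  obtain ⟨m, rfl | rfl⟩ := n.eq_nat_or_neg
  · refine hasSum_congr2 (qb_hasSum q hq0 hq m) (fun k => ?_) (by simp)
    simp only [Int.toNat_natCast, Int.toNat_neg_natCast, add_zero, qa]
    rw [mul_comm (k + m) k, mul_comm (qPoch q q (k + m))]
    ring
  · refine hasSum_congr2 ((qb_hasSum q hq0 hq m).mul_left (q ^ m)⁻¹) (fun k => ?_) ?_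
    · simp only [Int.toNat_natCast, Int.toNat_neg_natCast, add_zero, qa, neg_neg,
        pow_add q k m, mul_inv]
      ring
    · rw [← mul_assoc, zpow_neg, zpow_natCast]
      have : q ^ m ≠ 0 := pow_ne_zero _ hq0
      field_simp
      ring

lemma two_t (n : ℤ) : 2 * ((n * (n - 1) / 2).toNat : ℤ) = n * (n - 1) := by
  have h0 : 0 ≤ n * (n - 1) := by
    rcases le_or_gt n 0 with h | h
    · exact mul_nonneg_of_nonpos_of_nonpos h (by omega)
    · exact mul_nonneg h.le (by omega)
  have := Int.two_mul_ediv_two_of_even n.even_mul_pred_self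
  omega

lemma two_choose (n : ℕ) : 2 * ((n.choose 2 : ℕ) : ℤ) = n * (n - 1) := by
  induction n with
  | zero => simp
  | succ k ih =>
    rw [Nat.choose_succ_succ' k 1, Nat.choose_one_right]
    push_cast
    linarith

lemma t_id (i j : ℕ) : i.choose 2 + j.choose 2 + j =
    (((i : ℤ) - j) * (((i : ℤ) - j) - 1) / 2).toNat + i * j := by
  have h1 := two_t ((i : ℤ) - j)
  have h2 := two_choose i
  have h3 := two_choose j
  zify
  apply mul_left_cancel₀ (two_ne_zero (α := ℤ))
  linarith

lemma t_neg (x : ℂ) (hx : x ≠ 0) (n : ℤ) :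
    x ^ ((-n) * (-n - 1) / 2).toNat = x ^ (n * (n - 1) / 2).toNat * x ^ n := by
  have h1 := two_t n
  have h2 := two_t (-n)
  rw [← zpow_natCast, ← zpow_natCast, ← zpow_add₀ hx]
  congr 1
  apply mul_left_cancel₀ (two_ne_zero (α := ℤ))
  linarith

lemma jtp_term (q : ℂ) (hq : ‖q‖ < 1) (z : ℂ) (hz : z ≠ 0) (n : ℤ) (i j : ℕ)
    (hn : (i : ℤ) - j = n) :
    q ^ (i.choose 2) * z ^ i / qPoch q q i * (q ^ (j.choose 2) * (q / z) ^ j / qPoch q q j) =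
    q ^ (n * (n - 1) / 2).toNat * z ^ n * (q ^ (i * j) / (qPoch q q i * qPoch q q j)) := by
  have ht := t_id i j
  rw [hn] at ht
  have hz' : z ^ n = z ^ i / z ^ j := by
    rw [← hn, zpow_sub₀ hz, zpow_natCast, zpow_natCast]
  have h3 : q ^ (i.choose 2) * q ^ (j.choose 2) * q ^ j =
    q ^ (n * (n - 1) / 2).toNat * q ^ (i * j) := by
    rw [← pow_add, ← pow_add, ← pow_add, ht]
  rw [hz', div_pow]
  have a1 := qPoch_ne q hq i
  have a2 := qPoch_ne q hq j
  field_simp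
  linear_combination h3

lemma jtp (q : ℂ) (hq0 : q ≠ 0) (hq : ‖q‖ < 1) (z : ℂ) (hz : z ≠ 0) :
    HasSum (fun n : ℤ => q ^ (n * (n - 1) / 2).toNat * z ^ n)
      (qPochInf (-z) q * qPochInf (-(q / z)) q * qPochInf q q) := by
  have s1 := (euler_summable q hq z)
  have s2 := (euler_summable q hq (q / z))
  have hsm := summable_mul_of_summable_norm s1.norm s2.norm
  have hp : HasSum (fun x : ℕ × ℕ => q ^ (x.1.choose 2) * z ^ x.1 / qPoch q q x.1 *
      (q ^ (x.2.choose 2) * (q / z) ^ x.2 / qPoch q q x.2))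
      (qPochInf (-z) q * qPochInf (-(q / z)) q) := by
    rw [← euler_tsum q hq, ← euler_tsum q hq, tsum_mul_tsum_of_summable_norm s1.norm s2.norm]
    exact hsm.hasSum
  rw [← zEquiv.hasSum_iff] at hp
  have hfib : ∀ n : ℤ, HasSum (fun k : ℕ => ((fun x : ℕ × ℕ =>
      q ^ (x.1.choose 2) * z ^ x.1 / qPoch q q x.1 *
      (q ^ (x.2.choose 2) * (q / z) ^ x.2 / qPoch q q x.2)) ∘ zEquiv) (n, k))
      (q ^ (n * (n - 1) / 2).toNat * z ^ n * (qPochInf q q)⁻¹) := fun n =>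
    hasSum_congr2 ((fiber1 q hq n).mul_left (q ^ (n * (n - 1) / 2).toNat * z ^ n))
      (fun k => jtp_term q hq z hz n _ _ (zEquiv_sub n k)) rfl
  have h := (hp.prod_fiberwise hfib).mul_right (qPochInf q q)
  refine hasSum_congr2 h (fun n => ?_) rfl
  rw [mul_assoc, inv_mul_cancel₀ (qPochInf_ne q hq), mul_one]

lemma main_term (q : ℂ) (hq : q ≠ 0) (p : ℕ) (y : ℂ) (n : ℤ) (i j : ℕ)
    (hn : (i : ℤ) - j = n) :
    qTauP q p ((j : ℤ) - (i : ℤ)) * qTauZ q ((i : ℤ) - (j : ℤ)) * y ^ ((i : ℤ) - (j : ℤ)) *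
      q ^ (((i : ℤ) - 1) * (j : ℤ)) / (qPoch q q i * qPoch q q j) =
    (q ^ (p + 1)) ^ (n * (n - 1) / 2).toNat * (q ^ p * y) ^ n *
      (q ^ (i * j) * (q ^ j)⁻¹ / (qPoch q q i * qPoch q q j)) := by
  rw [← neg_sub (i : ℤ) (j : ℤ), hn, qTauP, qTauZ, pow_mul, t_neg _ (pow_ne_zero p hq),
    pow_succ q p, mul_pow (q ^ p) q, mul_zpow (q ^ p) y n]
  have hs1 : (-1 : ℂ) ^ (-n) * (-1 : ℂ) ^ n = 1 := by
    rw [← zpow_add₀ (by norm_num)]; simp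
  have hs2 : q ^ (((i : ℤ) - 1) * j) = q ^ (i * j) * (q ^ j)⁻¹ := by
    rw [sub_mul, one_mul, zpow_sub₀ hq, ← Nat.cast_mul, zpow_natCast, zpow_natCast,
      div_eq_mul_inv]
  rw [hs2]
  linear_combination ((q ^ p) ^ (n * (n - 1) / 2).toNat * (q ^ p) ^ n *
    q ^ (n * (n - 1) / 2).toNat * y ^ n * (q ^ (i * j) * (q ^ j)⁻¹) /
    (qPoch q q i * qPoch q q j)) * hs1

theorem stmt12 (q : ℂ) (hq0 : 0 < ‖q‖) (hq1 : ‖q‖ < 1)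
    (p : ℕ) (hp : 0 < p) (y : ℂ) (hy : y ≠ 0)
    (h1 : Summable (fun ij : ℕ × ℕ => ‖qTauP q p ((ij.2 : ℤ) - (ij.1 : ℤ)) *
      qTauZ q ((ij.1 : ℤ) - (ij.2 : ℤ)) * y ^ ((ij.1 : ℤ) - (ij.2 : ℤ)) *
      q ^ (((ij.1 : ℤ) - 1) * (ij.2 : ℤ)) / (qPoch q q ij.1 * qPoch q q ij.2)‖)) :
    ∑' ij : ℕ × ℕ, qTauP q p ((ij.2 : ℤ) - (ij.1 : ℤ)) *
      qTauZ q ((ij.1 : ℤ) - (ij.2 : ℤ)) * y ^ ((ij.1 : ℤ) - (ij.2 : ℤ)) *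
      q ^ (((ij.1 : ℤ) - 1) * (ij.2 : ℤ)) / (qPoch q q ij.1 * qPoch q q ij.2)
    = (qPochInf (-1 / y) (q ^ (p + 1)) * qPochInf (-q ^ (p + 1) * y) (q ^ (p + 1)) *
        qPochInf (q ^ (p + 1)) (q ^ (p + 1))
      + qPochInf (-q / y) (q ^ (p + 1)) * qPochInf (-q ^ p * y) (q ^ (p + 1)) *
        qPochInf (q ^ (p + 1)) (q ^ (p + 1))) / qPochInf q q := by
  have hq : q ≠ 0 := norm_pos_iff.mp hq0
  have hs := h1.of_norm.hasSum
  rw [← zEquiv.hasSum_iff] at hs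
  have hf := hs.prod_fiberwise (g := fun n : ℤ => (q ^ (p + 1)) ^ (n * (n - 1) / 2).toNat *
    (q ^ p * y) ^ n * ((1 + q ^ n) * (qPochInf q q)⁻¹)) ?_
  · have hQ : ‖q ^ (p + 1)‖ < 1 := by
      rw [norm_pow]; exact pow_lt_one₀ (norm_nonneg _) hq1 (by omega)
    have hQ0 : q ^ (p + 1) ≠ 0 := pow_ne_zero _ hq
    have hz1 : q ^ p * y ≠ 0 := mul_ne_zero (pow_ne_zero _ hq) hy
    have hz2 : q ^ (p + 1) * y ≠ 0 := mul_ne_zero hQ0 hy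
    have j1 := jtp _ hQ0 hQ _ hz1
    have j2 := jtp _ hQ0 hQ _ hz2
    have j3 := (j2.add j1).mul_right (qPochInf q q)⁻¹
    have e1 : q ^ (p + 1) / (q ^ p * y) = q / y := by
      rw [pow_succ]; field_simp
    have e2 : q ^ (p + 1) / (q ^ (p + 1) * y) = 1 / y := by field_simp
    rw [e1, e2] at j3
    rw [hf.unique (hasSum_congr2 j3 (fun n => ?_) rfl)]
    · simp only [neg_mul, neg_div, div_eq_mul_inv _ (qPochInf q q)]
      ring
    · rw [pow_succ q p, mul_right_comm (q ^ p) q y, mul_zpow (q ^ p * y) q n]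
      ring
  · intro n
    have := (fiber2 q hq hq1 n).mul_left ((q ^ (p + 1)) ^ (n * (n - 1) / 2).toNat *
      (q ^ p * y) ^ n)
    exact hasSum_congr2 this (fun k => main_term q hq p y n _ _ (zEquiv_sub n k)) rfl
end

section
/- Let q ∈ ℂ with 0 < |q| < 1 and let a₁, a₂, b₁, x ∈ ℂ satisfy: a₁ ≠ 0, a₂ ≠ 0, b₁ ≠ 0; a₁ ∉ {q^m : m ≥ 1} and a₂ ∉ {q^m : m ≥ 1} (so that (q/a₁;q)_n ≠ 0 and (q/a₂;q)_n ≠ 0 for all n); b₁/a₁ ∉ {q^m : m ∈ ℤ} (so that (b₁ q^{-n}/a₁;q)_k ≠ 0 for all n, k); and x ≠ q^{-m} for every m ∈ ℕ (so that (x;q)_n ≠ 0 for all n). Assume both series below converge absolutely. Then ∑_{n≥0} [q^{n^2} (a₁ q/b₁;q)_n / ((q;q)_n (q/a₁;q)_n (q/a₂;q)_n)] (x/a₁)^n · ∑_{k=0}^{n} (q^{-n};q)_k (a₂ q^{-n};q)_k (b₁/a₂)^k / ((q;q)_k (b₁ q^{-n}/a₁;q)_k) = (x;q)_∞ · ∑_{n≥0}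 (-1)^n q^{3n(n-1)/2} (b₁/(a₁ a₂);q)_n (x q^2/b₁)^n / ((q;q)_n (x;q)_n (q/a₁;q)_n (q/a₂;q)_n). -/
open Finset Filter Topology

lemma qP_zero (a q : ℂ) : qPoch a q 0 = 1 := by simp [qPoch]

lemma qP_succ (a q : ℂ) (n : ℕ) : qPoch a q (n+1) = qPoch a q n * (1 - a * q ^ n) := by
  simp [qPoch, Finset.prod_range_succ]

lemma qP_succ' (a q : ℂ) (n : ℕ) : qPoch a q (n+1) = (1 - a) * qPoch (a * q) q n := by
  rw [qPoch, Finset.prod_range_succ', mul_comm, qPoch]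
  simp only [pow_zero, mul_one]
  congr 1
  exact Finset.prod_congr rfl fun k _ => by ring

lemma qP_add (a q : ℂ) (n m : ℕ) :
    qPoch a q (n+m) = qPoch a q n * qPoch (a * q ^ n) q m := by
  induction m with
  | zero => simp [qP_zero]
  | succ m ih => rw [← add_assoc, qP_succ, ih, qP_succ]; ring

lemma qP_ne (a q : ℂ) (h : ∀ k : ℕ, 1 - a * q ^ k ≠ 0) (n : ℕ) : qPoch a q n ≠ 0 :=
  Finset.prod_ne_zero_iff.mpr fun k _ => h k

lemma T_succ (n : ℕ) : (n+1).choose 2 = n.choose 2 + n := by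
  rw [Nat.choose_succ_succ' n 1]; simp; ring

lemma T_add (n m : ℕ) : (n+m).choose 2 = n.choose 2 + m.choose 2 + n * m := by
  induction m with
  | zero => simp
  | succ m ih => rw [← add_assoc, T_succ, ih, T_succ]; ring

lemma T_two (n : ℕ) : 2 * n.choose 2 + n = n * n := by
  induction n with
  | zero => simp
  | succ m ih => rw [T_succ]; linarith

/-- Product of `w - v q^i`. -/
noncomputable def qR (w v q : ℂ) (n : ℕ) : ℂ := ∏ i ∈ Finset.range n, (w - v * q ^ i)

lemma qR_succ (w v q : ℂ) (n : ℕ) : qR w v q (n+1) = qR w v q n * (w - v * q ^ n) := by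
  simp [qR, Finset.prod_range_succ]

lemma qR_scale (w v q : ℂ) (n : ℕ) : qR (w*q) (v*q) q n = q ^ n * qR w v q n := by
  induction n with
  | zero => simp [qR]
  | succ n ih => rw [qR_succ, qR_succ, ih]; ring

lemma qR_zero (w q : ℂ) (n : ℕ) : qR w 0 q n = w ^ n := by simp [qR]

lemma qR_poch (w v q : ℂ) (hw : w ≠ 0) (n : ℕ) : qR w v q n = qPoch (v / w) q n * w ^ n := by
  induction n with
  | zero => simp [qR, qPoch]
  | succ n ih => rw [qR_succ, qP_succ, ih]; field_simp; ring

lemma q_pascal (q : ℂ) (hq : ∀ n : ℕ, qPoch q q n ≠ 0) (g : ℕ → ℕ → ℂ) (j : ℕ) :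
    (1 - q ^ (j+1)) * ∑ p ∈ antidiagonal (j+1), g p.1 p.2 / (qPoch q q p.1 * qPoch q q p.2) =
    ∑ p ∈ antidiagonal j, (q ^ p.1 * g p.1 (p.2+1) + g (p.1+1) p.2) /
      (qPoch q q p.1 * qPoch q q p.2) := by
  have h1 : ∀ n : ℕ, 1 - q ^ (n+1) ≠ 0 := by
    intro n h
    apply hq (n+1)
    rw [qP_succ, ← pow_succ', h, mul_zero]
  have key : (1 - q ^ (j+1)) *
      ∑ p ∈ antidiagonal (j+1), g p.1 p.2 / (qPoch q q p.1 * qPoch q q p.2) =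
      ∑ p ∈ antidiagonal (j+1), q ^ p.1 * (1 - q ^ p.2) * g p.1 p.2 / (qPoch q q p.1 * qPoch q q p.2)
      + ∑ p ∈ antidiagonal (j+1), (1 - q ^ p.1) * g p.1 p.2 / (qPoch q q p.1 * qPoch q q p.2) := by
    rw [Finset.mul_sum, ← Finset.sum_add_distrib]
    refine Finset.sum_congr rfl fun p hp => ?_
    rw [← HasAntidiagonal.mem_antidiagonal.mp hp, pow_add]
    ring
  rw [key, Finset.Nat.sum_antidiagonal_succ', Finset.Nat.sum_antidiagonal_succ]
  simp only [pow_zero, sub_self, mul_zero, zero_mul, zero_div, zero_add]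
  rw [← Finset.sum_add_distrib]
  refine Finset.sum_congr rfl fun p hp => ?_
  have e1 := hq p.1
  have e2 := hq p.2
  have e3 := h1 p.1
  have e4 := h1 p.2
  rw [qP_succ q q p.1, qP_succ q q p.2, ← pow_succ', ← pow_succ']
  field_simp

lemma q_vander (q : ℂ) (hq : ∀ n : ℕ, qPoch q q n ≠ 0) (j : ℕ) : ∀ w v : ℂ,
    ∑ p ∈ antidiagonal j, ((-1) ^ p.1 * q ^ (p.1.choose 2) * qR w v q p.1 *
      qPoch (v * q ^ p.1) q p.2) / (qPoch q q p.1 * qPoch q q p.2) =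
    qPoch w q j / qPoch q q j := by
  induction j with
  | zero => intro w v; simp [qPoch, qR]
  | succ j ih =>
    intro w v
    have h1 : 1 - q ^ (j+1) ≠ 0 := by
      intro h
      apply hq (j+1)
      rw [qP_succ, ← pow_succ', h, mul_zero]
    apply mul_left_cancel₀ h1
    rw [q_pascal q hq (fun a b => (-1) ^ a * q ^ (a.choose 2) * qR w v q a *
      qPoch (v * q ^ a) q b)]
    rw [qP_succ' w, qP_succ q, ← pow_succ']
    have : (1 - q ^ (j+1)) * ((1 - w) * qPoch (w * q) q j / (qPoch q q j * (1 - q ^ (j+1)))) =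
      (1 - w) * (qPoch (w * q) q j / qPoch q q j) := by
      have := hq j
      field_simp
    rw [this, ← ih (w*q) (v*q), Finset.mul_sum]
    refine Finset.sum_congr rfl fun p hp => ?_
    rw [qR_scale, qR_succ, T_succ, qP_succ' (v * q ^ p.1)]
    have : v * q * q ^ p.1 = v * q ^ p.1 * q := by ring
    have h' : v * q ^ (p.1 + 1) = v * q ^ p.1 * q := by ring
    rw [this, h']
    ring

lemma q_binom (q : ℂ) (hq : ∀ n : ℕ, qPoch q q n ≠ 0) (j : ℕ) (w : ℂ) :
    ∑ p ∈ antidiagonal j, ((-1) ^ p.1 * q ^ (p.1.choose 2) * w ^ p.1) /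
      (qPoch q q p.1 * qPoch q q p.2) = qPoch w q j / qPoch q q j := by
  rw [← q_vander q hq j w 0]
  refine Finset.sum_congr rfl fun p _ => ?_
  simp [qR_zero, qPoch]

lemma anti_assoc (F : ℕ → ℕ → ℕ → ℂ) (N : ℕ) :
    ∑ p ∈ antidiagonal N, ∑ r ∈ antidiagonal p.1, F r.1 r.2 p.2 =
    ∑ p ∈ antidiagonal N, ∑ r ∈ antidiagonal p.2, F p.1 r.1 r.2 := by
  rw [Finset.sum_sigma', Finset.sum_sigma']
  refine Finset.sum_nbij' (fun s => ⟨(s.2.1, s.2.2 + s.1.2), (s.2.2, s.1.2)⟩)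
    (fun s => ⟨(s.1.1 + s.2.1, s.2.2), (s.1.1, s.2.1)⟩) ?_ ?_ ?_ ?_ ?_
  · rintro ⟨⟨a, b⟩, ⟨c, d⟩⟩ h; simp at h ⊢; omega
  · rintro ⟨⟨a, b⟩, ⟨c, d⟩⟩ h; simp at h ⊢; omega
  · rintro ⟨⟨a, b⟩, ⟨c, d⟩⟩ h; simp at h ⊢; obtain ⟨h1, h2⟩ := h; subst h2; simp
  · rintro ⟨⟨a, b⟩, ⟨c, d⟩⟩ h; simp at h ⊢; obtain ⟨h1, h2⟩ := h; subst h2; simp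
  · rintro ⟨⟨a, b⟩, ⟨c, d⟩⟩ h; rfl

lemma q_main (q : ℂ) (hq : ∀ n : ℕ, qPoch q q n ≠ 0) (u v w : ℂ)
    (hu : ∀ n : ℕ, qPoch u q n ≠ 0) (hv : ∀ n : ℕ, qPoch v q n ≠ 0) (N : ℕ) :
    ∑ p ∈ antidiagonal N, qPoch w q p.1 * (-u) ^ p.1 * q ^ (p.1.choose 2) /
      (qPoch q q p.1 * qPoch v q p.1 * qPoch q q p.2) =
    qPoch u q N * ∑ p ∈ antidiagonal N, q ^ (2 * p.1.choose 2) * qR w v q p.1 * u ^ p.1 /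
      (qPoch q q p.1 * qPoch u q p.1 * qPoch v q p.1 * qPoch q q p.2) := by
  have h1 : ∀ p ∈ antidiagonal N, qPoch w q p.1 * (-u) ^ p.1 * q ^ (p.1.choose 2) /
      (qPoch q q p.1 * qPoch v q p.1 * qPoch q q p.2) =
      ∑ r ∈ antidiagonal p.1, (fun a b c : ℕ => (-1) ^ a * q ^ (a.choose 2) * qR w v q a
        * (-u) ^ (a+b) * q ^ ((a+b).choose 2) /
          (qPoch q q a * qPoch q q b * qPoch q q c * qPoch v q a)) r.1 r.2 p.2 := by
    intro p _
    have : qPoch w q p.1 * (-u) ^ p.1 * q ^ (p.1.choose 2) /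
      (qPoch q q p.1 * qPoch v q p.1 * qPoch q q p.2) =
      ((-u) ^ p.1 * q ^ (p.1.choose 2) / (qPoch v q p.1 * qPoch q q p.2)) *
       (qPoch w q p.1 / qPoch q q p.1) := by
       ring
    rw [this, ← q_vander q hq p.1 w v, Finset.mul_sum]
    refine Finset.sum_congr rfl fun r hr => ?_
    rw [← HasAntidiagonal.mem_antidiagonal.mp hr, qP_add v q]
    have e1 := hv (r.1 + r.2)
    rw [qP_add v q] at e1
    have e2 := left_ne_zero_of_mul e1
    have e3 := right_ne_zero_of_mul e1
    have e4 := hq r.1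
    have e5 := hq r.2
    have e6 := hq p.2
    field_simp
  rw [Finset.sum_congr rfl h1, anti_assoc (fun a b c : ℕ => (-1) ^ a * q ^ (a.choose 2) * qR w v q a
        * (-u) ^ (a+b) * q ^ ((a+b).choose 2) /
          (qPoch q q a * qPoch q q b * qPoch q q c * qPoch v q a)), Finset.mul_sum]
  refine Finset.sum_congr rfl fun p hp => ?_
  have h2 : qPoch u q N * (q ^ (2 * p.1.choose 2) * qR w v q p.1 * u ^ p.1 /
      (qPoch q q p.1 * qPoch u q p.1 * qPoch v q p.1 * qPoch q q p.2)) =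
      (q ^ (2 * p.1.choose 2) * qR w v q p.1 * u ^ p.1 / (qPoch q q p.1 * qPoch v q p.1)) *
      (qPoch (u * q ^ p.1) q p.2 / qPoch q q p.2) := by
    rw [← HasAntidiagonal.mem_antidiagonal.mp hp, qP_add u q]
    have e1 := hu p.1
    field_simp
  rw [h2, ← q_binom q hq, Finset.mul_sum]
  refine Finset.sum_congr rfl fun r hr => ?_
  rw [T_add]
  have : (-1 : ℂ) ^ p.1 * (-u) ^ (p.1 + r.1) = u ^ p.1 * ((-1) ^ r.1 * u ^ r.1) := by
    rw [pow_add, ← mul_assoc, ← mul_pow, neg_pow u r.1]; ring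
  rw [div_mul_div_comm]
  congr 1
  · linear_combination (q ^ (p.1.choose 2) * qR w v q p.1 * q ^ (p.1.choose 2 + r.1.choose 2 + p.1 * r.1)) * this
  · ring

lemma q_rev (q a : ℂ) (hq : q ≠ 0) (ha : a ≠ 0) (k m : ℕ) :
    qPoch (a * q ^ (-((k+m : ℕ) : ℤ))) q k * qPoch (q / a) q m * q ^ ((k+1).choose 2 + k * m) =
      qPoch (q / a) q (m + k) * (-a) ^ k := by
  induction k with
  | zero => simp [qPoch]
  | succ k ih =>
    have e : a * q ^ (-((k+1+m : ℕ) : ℤ)) * q = a * q ^ (-((k+m : ℕ) : ℤ)) := by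
      have : (-((k+m : ℕ) : ℤ)) = (-((k+1+m : ℕ) : ℤ)) + 1 := by push_cast; ring
      rw [this, zpow_add_one₀ hq]; ring
    rw [qP_succ', e, ← add_assoc m, qP_succ, T_succ (k+1)]
    have e2 : (1 - a * q ^ (-((k+1+m : ℕ) : ℤ))) * q ^ (k+1+m) = (-a) * (1 - q / a * q ^ (m+k)) := by
      rw [zpow_neg, zpow_natCast]
      field_simp
      ring
    calc _ = ((1 - a * q ^ (-((k+1+m : ℕ) : ℤ))) * q ^ (k+1+m)) * (qPoch (a * q ^ (-((k+m : ℕ) : ℤ))) q k * qPoch (q / a) q m * q ^ ((k+1).choose 2 + k * m)) := by ring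
      _ = _ := by rw [ih, e2]; ring

/-- Terms of Euler's series. -/
noncomputable def qT (q y : ℂ) (m : ℕ) : ℂ := (-1) ^ m * q ^ (m.choose 2) * y ^ m / qPoch q q m

lemma one_sub_pow_ne (q : ℂ) (hq1 : ‖q‖ < 1) (n : ℕ) : 1 - q ^ (n+1) ≠ 0 := by
  intro h
  have h' : q ^ (n+1) = 1 := (sub_eq_zero.mp h).symm
  have : ‖q‖ ^ (n+1) < 1 := pow_lt_one₀ (norm_nonneg _) hq1 (by omega)
  rw [← norm_pow, h'] at this
  simp at this

lemma qqP_ne (q : ℂ) (hq1 : ‖q‖ < 1) (n : ℕ) : qPoch q q n ≠ 0 :=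
  qP_ne _ _ (fun k => by rw [← pow_succ']; exact one_sub_pow_ne q hq1 k) n

lemma qT_succ (q y : ℂ) (hq1 : ‖q‖ < 1) (m : ℕ) :
    qT q y (m+1) = -(q ^ m * y / (1 - q ^ (m+1))) * qT q y m := by
  have h1 := one_sub_pow_ne q hq1 m
  have h2 := qqP_ne q hq1 m
  rw [qT, qT, qP_succ, T_succ, ← pow_succ']
  field_simp
  ring

lemma qT_summable (q y : ℂ) (hq1 : ‖q‖ < 1) : Summable (fun m => ‖qT q y m‖) := by
  have ht : Tendsto (fun m : ℕ => ‖-(q ^ m * y / (1 - q ^ (m+1)))‖) atTop (𝓝 0) := by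
    have h0 := tendsto_pow_atTop_nhds_zero_of_norm_lt_one hq1
    have h1 := (tendsto_add_atTop_iff_nat 1).mpr h0
    have h2 := (h0.mul_const y).div (tendsto_const_nhds (x := (1:ℂ)) |>.sub h1) (by simp)
    simpa using h2.neg.norm
  refine summable_of_ratio_norm_eventually_le (r := 1/2) (by norm_num) ?_
  filter_upwards [ht.eventually_lt_const (show (0:ℝ) < 1/2 by norm_num)] with m hm
  rw [norm_norm, norm_norm, qT_succ q y hq1, norm_mul]
  exact mul_le_mul_of_nonneg_right hm.le (norm_nonneg _)

lemma qT_feq (q y : ℂ) (hq1 : ‖q‖ < 1) :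
    ∑' m, qT q y m = (1 - y) * ∑' m, qT q (y * q) m := by
  have s1 := (qT_summable q y hq1).of_norm
  have s2 := (qT_summable q (y*q) hq1).of_norm
  have hd : ∀ m, qT q y (m+1) = qT q (y*q) (m+1) - y * qT q (y*q) m := by
    intro m
    have h1 := one_sub_pow_ne q hq1 m
    have h2 := qqP_ne q hq1 m
    rw [qT, qT, qT, qP_succ, T_succ, ← pow_succ']
    field_simp
    ring
  rw [s1.tsum_eq_zero_add, tsum_congr hd,
    Summable.tsum_sub ((summable_nat_add_iff 1).mpr s2) (s2.mul_left y), tsum_mul_left]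
  have := s2.tsum_eq_zero_add
  have e0 : qT q y 0 = qT q (y*q) 0 := by simp [qT]
  rw [e0]
  linear_combination -this

lemma qT_iter (q y : ℂ) (hq1 : ‖q‖ < 1) (n : ℕ) :
    ∑' m, qT q y m = qPoch y q n * ∑' m, qT q (y * q ^ n) m := by
  induction n with
  | zero => simp [qPoch]
  | succ n ih =>
    rw [ih, qT_feq q _ hq1, qP_succ, pow_succ]
    ring_nf

lemma qP_tendsto (q y : ℂ) (hq1 : ‖q‖ < 1) :
    Tendsto (fun n => qPoch y q n) atTop (𝓝 (qPochInf y q)) := by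
  have hs : Summable (fun k : ℕ => ‖-(y * q ^ k)‖) := by
    simp only [norm_neg, norm_mul, norm_pow]
    exact (summable_geometric_of_lt_one (norm_nonneg _) hq1).mul_left _
  have := (multipliable_one_add_of_summable hs).tendsto_prod_tprod_nat
  simpa [qPoch, qPochInf, sub_eq_add_neg] using this

lemma qT_pow (q y z : ℂ) (m : ℕ) : qT q (y * z) m = qT q y m * z ^ m := by
  rw [qT, qT]; ring

lemma euler (q y : ℂ) (hq1 : ‖q‖ < 1) : qPochInf y q = ∑' m, qT q y m := by
  have h0 := tendsto_pow_atTop_nhds_zero_of_norm_lt_one hq1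
  have ht : Tendsto (fun n : ℕ => ∑' m, qT q (y * q ^ n) m) atTop
      (𝓝 (∑' m, qT q (y * 0) m)) := by
    refine tendsto_tsum_of_dominated_convergence (qT_summable q y hq1) ?_ ?_
    · intro k
      simp only [qT_pow]
      exact (h0.pow k).const_mul _
    · refine Eventually.of_forall fun n k => ?_
      rw [qT_pow, norm_mul, ← pow_mul, norm_pow]
      exact mul_le_of_le_one_right (norm_nonneg _) (pow_le_one₀ (norm_nonneg _) hq1.le)
  have h1 : ∑' m, qT q (y * 0) m = 1 := by
    rw [tsum_eq_single 0]
    · simp [qT, qPoch]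
    · intro m hm; simp [qT, hm]
  rw [h1] at ht
  have h2 := (qP_tendsto q y hq1).mul ht
  simp only [← qT_iter q y hq1, mul_one] at h2
  exact tendsto_nhds_unique h2 tendsto_const_nhds

lemma inf_split (q y : ℂ) (hq1 : ‖q‖ < 1) (n : ℕ) :
    qPochInf y q = qPoch y q n * qPochInf (y * q ^ n) q := by
  rw [euler q y hq1, euler q _ hq1, ← qT_iter q y hq1]

lemma double_sum (c t : ℕ → ℂ) (q : ℂ) (hq1 : ‖q‖ < 1) (hc : Summable fun n => ‖c n‖)
    (ht : Summable fun n => ‖t n‖) :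
    ∑' n, c n * ∑' m, t m * (q ^ n) ^ m =
      ∑' N, ∑ p ∈ antidiagonal N, c p.1 * (t p.2 * (q ^ p.1) ^ p.2) := by
  have hb : ∀ n m : ℕ, ‖(q ^ n) ^ m‖ ≤ 1 := fun n m => by
    rw [← pow_mul, norm_pow]; exact pow_le_one₀ (norm_nonneg _) hq1.le
  have hs : Summable (fun p : ℕ × ℕ => c p.1 * (t p.2 * (q ^ p.1) ^ p.2)) := by
    refine Summable.of_norm_bounded (summable_mul_of_summable_norm hc ht).norm ?_
    intro p
    simp only [norm_mul]
    gcongr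
    exact mul_le_of_le_one_right (norm_nonneg _) (hb _ _)
  have h1 := hs.tsum_prod
  simp only [tsum_mul_left] at h1
  rw [← h1, ← HasAntidiagonal.sigmaAntidiagonalEquivProd.tsum_eq (_ : ℕ × ℕ → ℂ)]
  have hs' := HasAntidiagonal.sigmaAntidiagonalEquivProd.summable_iff.mpr hs
  conv_rhs => congr; ext; rw [← Finset.sum_finset_coe, ← tsum_fintype (L := .unconditional _)]
  exact hs'.tsum_sigma' (fun n ↦ (hasSum_fintype _).summable)

lemma coef (q : ℂ) (hq0 : q ≠ 0) (hq : ∀ n : ℕ, qPoch q q n ≠ 0)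
    (a₁ a₂ b₁ x : ℂ) (ha₁ : a₁ ≠ 0) (ha₂ : a₂ ≠ 0) (hb₁ : b₁ ≠ 0)
    (hu : ∀ n : ℕ, qPoch (q / a₁) q n ≠ 0) (hv : ∀ n : ℕ, qPoch (q / a₂) q n ≠ 0)
    (hw : ∀ n : ℕ, qPoch (a₁ * q / b₁) q n ≠ 0) (N : ℕ) :
    (q ^ (N ^ 2) * qPoch (a₁ * q / b₁) q N /
        (qPoch q q N * qPoch (q / a₁) q N * qPoch (q / a₂) q N)) * (x / a₁) ^ N *
      ∑ k ∈ Finset.range (N + 1),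
        qPoch (q ^ (-(N : ℤ))) q k * qPoch (a₂ * q ^ (-(N : ℤ))) q k * (b₁ / a₂) ^ k /
          (qPoch q q k * qPoch (b₁ * q ^ (-(N : ℤ)) / a₁) q k) =
    ∑ p ∈ antidiagonal N, ((-1 : ℂ) ^ p.1 * q ^ (3 * (p.1 * (p.1 - 1) / 2)) *
      qPoch (b₁ / (a₁ * a₂)) q p.1 * (x * q ^ 2 / b₁) ^ p.1 /
      (qPoch q q p.1 * qPoch (q / a₁) q p.1 * qPoch (q / a₂) q p.1)) *
      (qT q x p.2 * (q ^ p.1) ^ p.2) := by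
  set u := q / a₁ with hu'
  set v := q / a₂ with hv'
  set w := a₁ * q / b₁ with hw'
  have hw0 : w ≠ 0 := by rw [hw']; positivity
  have hR : ∀ p ∈ antidiagonal N, ((-1 : ℂ) ^ p.1 * q ^ (3 * (p.1 * (p.1 - 1) / 2)) *
      qPoch (b₁ / (a₁ * a₂)) q p.1 * (x * q ^ 2 / b₁) ^ p.1 /
      (qPoch q q p.1 * qPoch u q p.1 * qPoch v q p.1)) *
      (qT q x p.2 * (q ^ p.1) ^ p.2) = (x ^ N * (-1) ^ N * q ^ (N.choose 2)) *
      (q ^ (2 * p.1.choose 2) * qR w v q p.1 * u ^ p.1 /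
      (qPoch q q p.1 * qPoch u q p.1 * qPoch v q p.1 * qPoch q q p.2)) := by
    rintro ⟨n, m⟩ hp
    have hN : n + m = N := HasAntidiagonal.mem_antidiagonal.mp hp
    subst hN
    dsimp only
    have e1 : b₁ / (a₁ * a₂) = v / w := by rw [hv', hw']; field_simp
    have e2 : x * q ^ 2 / b₁ = x * (w * u) := by rw [hu', hw']; field_simp
    rw [← Nat.choose_two_right, qR_poch w v q hw0, e1, e2, qT, T_add]
    have := hu n
    have := hv n
    have := hq n
    have := hq m
    field_simp
    ring
  rw [Finset.sum_congr rfl hR, ← Finset.mul_sum]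
  have hM := q_main q hq u v w hu hv N
  have hM' := congrArg (fun z => x ^ N * (-1) ^ N * q ^ (N.choose 2) * (z / qPoch u q N)) hM
  simp only [mul_div_cancel_left₀ _ (hu N)] at hM'
  rw [← hM', ← Finset.Nat.sum_antidiagonal_eq_sum_range_succ_mk (fun p : ℕ × ℕ =>
    qPoch (q ^ (-(N : ℤ))) q p.1 * qPoch (a₂ * q ^ (-(N : ℤ))) q p.1 * (b₁ / a₂) ^ p.1 /
          (qPoch q q p.1 * qPoch (b₁ * q ^ (-(N : ℤ)) / a₁) q p.1)),
    ← Finset.Nat.sum_antidiagonal_swap, Finset.sum_div, Finset.mul_sum, Finset.mul_sum]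
  refine Finset.sum_congr rfl ?_
  rintro ⟨m, k⟩ hp
  have hN : m + k = N := HasAntidiagonal.mem_antidiagonal.mp hp
  have hN' : k + m = N := by omega
  simp only [Prod.fst_swap]
  have r1 := q_rev q 1 hq0 one_ne_zero k m
  have r2 := q_rev q a₂ hq0 ha₂ k m
  have r3 := q_rev q (b₁ / a₁) hq0 (div_ne_zero hb₁ ha₁) k m
  have e3 : q / (b₁ / a₁) = w := by rw [hw']; field_simp
  have e4 : b₁ / a₁ * q ^ (-(N : ℤ)) = b₁ * q ^ (-(N : ℤ)) / a₁ := by ring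
  rw [hN, hN', one_mul, div_one] at r1
  rw [hN, hN', ← hv'] at r2
  rw [hN, hN', e3, e4] at r3
  have hE : q ^ (N ^ 2) = q ^ (N.choose 2) * q ^ (m.choose 2) * q ^ m *
      q ^ ((k+1).choose 2 + k * m) := by
    rw [← pow_add, ← pow_add, ← pow_add, ← hN, T_add, T_succ]
    congr 1
    have := T_two k
    have := T_two m
    nlinarith
  set A := qPoch (q ^ (-(N : ℤ))) q k
  set B := qPoch (a₂ * q ^ (-(N : ℤ))) q k
  set C := qPoch (b₁ * q ^ (-(N : ℤ)) / a₁) q k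
  set E := q ^ ((k+1).choose 2 + k * m) with hEdef
  have hE0 : E ≠ 0 := pow_ne_zero _ hq0
  have hqN := hq N
  have hqm := hq m
  have hqk := hq k
  have hvN := hv N
  have hvm := hv m
  have huN := hu N
  have hwN := hw N
  have hwm := hw m
  have hA : A = qPoch q q N * (-1) ^ k / (qPoch q q m * E) := by
    rw [eq_div_iff (by positivity), ← r1]; ring
  have hB : B = qPoch v q N * (-a₂) ^ k / (qPoch v q m * E) := by
    rw [eq_div_iff (by positivity), ← r2]; ring
  have hC : C = qPoch w q N * (-(b₁ / a₁)) ^ k / (qPoch w q m * E) := by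
    rw [eq_div_iff (by positivity), ← r3]; ring
  rw [hA, hB, hC, hE, hu', neg_pow a₂, neg_pow (b₁ / a₁), neg_pow (q / a₁)]
  have hN2 : (x / a₁) ^ N = x ^ N / (a₁ ^ m * a₁ ^ k) := by
    rw [div_pow, ← pow_add, hN]
  have hN3 : (-1 : ℂ) ^ N = (-1) ^ m * (-1) ^ k := by rw [← hN, pow_add]
  have hs : ((-1 : ℂ) ^ m) * (-1) ^ m = 1 := by rw [← mul_pow]; simp
  rw [hN2, hN3]
  have hk1 : ((-1 : ℂ) ^ k) ≠ 0 := pow_ne_zero _ (by norm_num)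
  simp only [div_pow]
  rw [← hu']
  generalize (-1 : ℂ) ^ k = s at *
  generalize (-1 : ℂ) ^ m = t at *
  field_simp
  linear_combination (-x ^ N) * hs

theorem stmt18 (q : ℂ) (hq0 : 0 < ‖q‖) (hq1 : ‖q‖ < 1)
    (a₁ a₂ b₁ x : ℂ) (ha₁ : a₁ ≠ 0) (ha₂ : a₂ ≠ 0) (hb₁ : b₁ ≠ 0)
    (ha₁q : ∀ m : ℕ, 1 ≤ m → a₁ ≠ q ^ m) (ha₂q : ∀ m : ℕ, 1 ≤ m → a₂ ≠ q ^ m)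
    (hb₁a₁ : ∀ m : ℤ, b₁ / a₁ ≠ q ^ m)
    (hx : ∀ m : ℕ, x ≠ q ^ (-(m : ℤ)))
    (h1 : Summable (fun n : ℕ => ‖(q ^ (n ^ 2) * qPoch (a₁ * q / b₁) q n /
        (qPoch q q n * qPoch (q / a₁) q n * qPoch (q / a₂) q n)) * (x / a₁) ^ n *
      ∑ k ∈ Finset.range (n + 1),
        qPoch (q ^ (-(n : ℤ))) q k * qPoch (a₂ * q ^ (-(n : ℤ))) q k * (b₁ / a₂) ^ k /
          (qPoch q q k * qPoch (b₁ * q ^ (-(n : ℤ)) / a₁) q k)‖))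
    (h2 : Summable (fun n : ℕ => ‖(-1 : ℂ) ^ n * q ^ (3 * (n * (n - 1) / 2)) *
      qPoch (b₁ / (a₁ * a₂)) q n * (x * q ^ 2 / b₁) ^ n /
      (qPoch q q n * qPoch x q n * qPoch (q / a₁) q n * qPoch (q / a₂) q n)‖)) :
    ∑' n : ℕ, (q ^ (n ^ 2) * qPoch (a₁ * q / b₁) q n /
        (qPoch q q n * qPoch (q / a₁) q n * qPoch (q / a₂) q n)) * (x / a₁) ^ n *
      ∑ k ∈ Finset.range (n + 1),
        qPoch (q ^ (-(n : ℤ))) q k * qPoch (a₂ * q ^ (-(n : ℤ))) q k * (b₁ / a₂) ^ k /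
          (qPoch q q k * qPoch (b₁ * q ^ (-(n : ℤ)) / a₁) q k)
    = qPochInf x q * ∑' n : ℕ, (-1 : ℂ) ^ n * q ^ (3 * (n * (n - 1) / 2)) *
      qPoch (b₁ / (a₁ * a₂)) q n * (x * q ^ 2 / b₁) ^ n /
      (qPoch q q n * qPoch x q n * qPoch (q / a₁) q n * qPoch (q / a₂) q n) := by
  have hq0' : q ≠ 0 := norm_pos_iff.mp hq0
  have hq := qqP_ne q hq1
  have hgen : ∀ a : ℂ, a ≠ 0 → (∀ m : ℕ, 1 ≤ m → a ≠ q ^ m) → ∀ n, qPoch (q / a) q n ≠ 0 := by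
    intro a ha h n
    refine qP_ne _ _ (fun k hk => h (k+1) (by omega) ?_) n
    field_simp at hk
    rw [pow_succ']
    linear_combination hk
  have hu := hgen a₁ ha₁ ha₁q
  have hv := hgen a₂ ha₂ ha₂q
  have hw : ∀ n, qPoch (a₁ * q / b₁) q n ≠ 0 := by
    have := hgen (b₁ / a₁) (div_ne_zero hb₁ ha₁)
      (fun m _ => by have := hb₁a₁ m; rwa [zpow_natCast] at this)
    have e : q / (b₁ / a₁) = a₁ * q / b₁ := by field_simp
    rwa [e] at this
  have hxn : ∀ n, qPoch x q n ≠ 0 := by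
    refine qP_ne _ _ (fun k hk => hx k ?_)
    rw [zpow_neg, zpow_natCast]
    refine eq_inv_of_mul_eq_one_left ?_
    linear_combination -hk
  simp only [coef q hq0' hq a₁ a₂ b₁ x ha₁ ha₂ hb₁ hu hv hw]
  set c : ℕ → ℂ := fun n => (-1 : ℂ) ^ n * q ^ (3 * (n * (n - 1) / 2)) *
      qPoch (b₁ / (a₁ * a₂)) q n * (x * q ^ 2 / b₁) ^ n /
      (qPoch q q n * qPoch (q / a₁) q n * qPoch (q / a₂) q n) with hc
  have hcx : ∀ n : ℕ, (-1 : ℂ) ^ n * q ^ (3 * (n * (n - 1) / 2)) *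
      qPoch (b₁ / (a₁ * a₂)) q n * (x * q ^ 2 / b₁) ^ n /
      (qPoch q q n * qPoch x q n * qPoch (q / a₁) q n * qPoch (q / a₂) q n) =
      c n / qPoch x q n := by
    intro n
    simp only [hc]
    rw [div_div]
    congr 1
    ring
  simp only [hcx] at h2 ⊢
  obtain ⟨C, hC⟩ := ((qP_tendsto q x hq1).norm.bddAbove_range)
  have hcs : Summable (fun n => ‖c n‖) := by
    refine Summable.of_nonneg_of_le (fun _ => norm_nonneg _) (fun n => ?_) (h2.mul_left C)
    have h3 : ‖qPoch x q n‖ ≤ C := hC ⟨n, rfl⟩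
    have h4 : c n = qPoch x q n * (c n / qPoch x q n) := by
      have := hxn n
      field_simp
    calc ‖c n‖ = ‖qPoch x q n‖ * ‖c n / qPoch x q n‖ := by rw [← norm_mul, ← h4]
      _ ≤ _ := by gcongr
  rw [← tsum_mul_left, ← double_sum c (qT q x) q hq1 hcs (qT_summable q x hq1)]
  refine tsum_congr fun n => ?_
  simp only [← qT_pow]
  rw [← euler q _ hq1, inf_split q x hq1 n]
  have := hxn n
  field_simp
end
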